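/- Let k be a field, and let L = [h_1, h_2 g_2, …, h_{ℓ−1} g_{ℓ−1}, g_ℓ] be a list of polynomials of k[x,y] where h_1, …, h_{ℓ−1} ∈ k[x] are monic non-constant with h_i dividing h_{i−1} for 2 ≤ i ≤ ℓ−1, and g_2, …, g_ℓ ∈ k[x][y] are monic in y with strictly increasing degrees in y. Suppose L is a lexicographic Gröbner basis (for x ≺ y) of the ideal it generates. Given a monic non-constant h_0 ∈ k[x] and g_{ℓ+1} ∈ k[x][y] monic in y with deg_y(g_{ℓ+1}) strictly larger than deg_y of all g_i, the list L' = [h_0·f : f ∈ L] concatenated with [g_{ℓ+1}] is a lexicographic Gröbner basis if and only if g_{ℓ+1} belongs to the ideal generated by L. Moreover L' is minimal if and only if L is minimal. -/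

import Mathlib

open Polynomial

/-! We view `k[x,y]` as `k[x][y]`, i.e. `Polynomial (Polynomial k)` where the outer
variable is `y` and the inner one is `x`.  For the lexicographic order with `x ≺ y`,
the leading monomial of a nonzero `f ∈ k[x][y]` is `y^(deg_y f) · x^(deg_x lc_y(f))`,
recorded as the pair `(deg_y, deg_x)`; divisibility of monomials is the componentwise
order. -/

/-- leading monomial (for lex with `x ≺ y`) of `f ∈ k[x][y]`, as a pair
`(degree in y, degree in x of the leading y-coefficient)`. -/
noncomputable def lmLex {k : Type*} [Field k] (f : Polynomial (Polynomial k)) : ℕ × ℕ :=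
  (f.natDegree, f.leadingCoeff.natDegree)

/-- divisibility of monomials `y^a x^b`, encoded as pairs `(a, b)`. -/
def monDvd (m m' : ℕ × ℕ) : Prop := m.1 ≤ m'.1 ∧ m.2 ≤ m'.2

/-- `L` is a lexicographic Gröbner basis (for `x ≺ y`) of the ideal it generates:
the leading monomial of every nonzero element of the ideal is divisible by the
leading monomial of some element of `L`. -/
noncomputable def IsLexGB {k : Type*} [Field k] (L : List (Polynomial (Polynomial k))) : Prop :=
  ∀ f ∈ Ideal.span {g | g ∈ L}, f ≠ 0 →
    ∃ g ∈ L, g ≠ 0 ∧ monDvd (lmLex g) (lmLex f)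

/-- `L` is a *minimal* lexicographic Gröbner basis: it is a lexicographic Gröbner
basis and no leading monomial of an element divides the leading monomial of
another element. -/
noncomputable def IsMinimalLexGB {k : Type*} [Field k]
    (L : List (Polynomial (Polynomial k))) : Prop :=
  IsLexGB L ∧ ∀ i j : Fin L.length, i ≠ j → ¬ monDvd (lmLex (L.get i)) (lmLex (L.get j))

/-! Lexicographic leading monomials are controlled by two degrees, and cancelling a leading term
never raises the `y`-degree.  Hence an element `f` of an ideal with lexicographic Gröbner basis `L`
is a combination of the elements of `L` of `y`-degree at most `deg_y f`.

Both implications of the equivalence amount to the fact that the elements of `⟨h₀ L, g'⟩` of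
`y`-degree below `deg_y g'` lie in `h₀ ⟨L⟩`.  If `L'` is a Gröbner basis, this is the elimination
property above; applied to `h₀ r`, where `r` is the remainder of `g'` modulo a monic element of
`⟨L⟩`, it gives `r ∈ ⟨L⟩` and so `g' ∈ ⟨L⟩`.  If `g' ∈ ⟨L⟩`, it follows by reducing modulo `g'`,
and multiplication by `h₀` then transports the Gröbner property from `L`. -/

theorem degree_le_degree_of_natDegree_le_natDegree {R : Type*} [Semiring R] {p q : R[X]}
    (hq : q ≠ 0) (hpq : p.natDegree ≤ q.natDegree) : p.degree ≤ q.degree :=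
  (degree_le_of_natDegree_le hpq).trans_eq (degree_eq_natDegree hq).symm

section Lists

variable {R : Type*}

/-- The list `[h₀ f : f ∈ L] ++ [g']` by which a lexicographic Gröbner basis is extended. -/
noncomputable def lazardExtension [Semiring R] (h₀ : R[X]) (L : List R[X][X]) (g' : R[X][X]) :
    List R[X][X] :=
  (L.map fun f => C h₀ * f) ++ [g']

/-- The list `[h₁, h₂ g₂, …, h_{ℓ-1} g_{ℓ-1}, g_ℓ]` of Lazard's theorem; for `ℓ ≤ 2` it is
`[h₁, g_ℓ]`. -/
noncomputable def lazardList [Semiring R] (ℓ : ℕ) (h : ℕ → R[X]) (g : ℕ → R[X][X]) :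
    List R[X][X] :=
  [C (h 1)] ++ ((List.range (ℓ - 2)).map fun i => C (h (i + 2)) * g (i + 2)) ++ [g ℓ]

theorem mem_lazardExtension [Semiring R] {h₀ : R[X]} {L : List R[X][X]} {g' p : R[X][X]} :
    p ∈ lazardExtension h₀ L g' ↔ (∃ q ∈ L, C h₀ * q = p) ∨ p = g' := by
  simp only [lazardExtension, List.mem_append, List.mem_map, List.mem_singleton]

theorem forall_mem_lazardList [Semiring R] {ℓ : ℕ} {h : ℕ → R[X]} {g : ℕ → R[X][X]}
    {P : R[X][X] → Prop} :
    (∀ p ∈ lazardList ℓ h g, P p) ↔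
      P (C (h 1)) ∧ (∀ i, 2 ≤ i → i < ℓ → P (C (h i) * g i)) ∧ P (g ℓ) := by
  have reindex : (∀ i < ℓ - 2, P (C (h (i + 2)) * g (i + 2))) ↔
      ∀ i, 2 ≤ i → i < ℓ → P (C (h i) * g i) := by
    refine ⟨fun H i hi hiℓ => ?_, fun H i hi => H (i + 2) (by omega) (by omega)⟩
    simpa only [Nat.sub_add_cancel hi] using H (i - 2) (by omega)
  simp only [lazardList, List.forall_mem_append, List.forall_mem_map, List.mem_singleton,
    forall_eq, List.mem_range, reindex, and_assoc]

theorem ne_zero_of_mem_lazardList [Semiring R] [NoZeroDivisors R] {ℓ : ℕ} (hℓ : 2 ≤ ℓ)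
    {h : ℕ → R[X]} {g : ℕ → R[X][X]} (hh : ∀ i, 1 ≤ i → i ≤ ℓ - 1 → h i ≠ 0)
    (hg : ∀ i, 2 ≤ i → i ≤ ℓ → g i ≠ 0) : ∀ p ∈ lazardList ℓ h g, p ≠ 0 :=
  forall_mem_lazardList.2
    ⟨C_ne_zero.2 (hh 1 le_rfl (by omega)),
      fun i hi hiℓ => mul_ne_zero (C_ne_zero.2 (hh i (by omega) (by omega))) (hg i hi hiℓ.le),
      hg ℓ hℓ le_rfl⟩

theorem natDegree_lt_of_mem_lazardList [Semiring R] {ℓ : ℕ} (hℓ : 2 ≤ ℓ) {h : ℕ → R[X]}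
    {g : ℕ → R[X][X]} {n : ℕ} (hg : ∀ i, 2 ≤ i → i ≤ ℓ → (g i).natDegree < n) :
    ∀ p ∈ lazardList ℓ h g, p.natDegree < n := by
  have hgℓ := hg ℓ hℓ le_rfl
  exact forall_mem_lazardList.2
    ⟨(natDegree_C _).trans_lt (Nat.zero_lt_of_lt hgℓ),
      fun i hi hiℓ => (natDegree_C_mul_le _ _).trans_lt (hg i hi hiℓ.le), hgℓ⟩

open scoped Pointwise in
theorem mem_span_lazardExtension [CommSemiring R] {h₀ : R[X]} {L : List R[X][X]}
    {g' f : R[X][X]} :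
    f ∈ Ideal.span {p | p ∈ lazardExtension h₀ L g'} ↔
      ∃ a ∈ Ideal.span {p | p ∈ L}, ∃ b, C h₀ * a + g' * b = f := by
  have hset : {p | p ∈ lazardExtension h₀ L g'} = {C h₀} * {p | p ∈ L} ∪ {g'} := by
    ext p
    simp only [mem_lazardExtension, Set.mem_ofPred_eq, Set.singleton_mul, Set.mem_union,
      Set.mem_image, Set.mem_singleton_iff]
  rw [hset, Ideal.span_union, ← Ideal.span_mul_span', Submodule.mem_sup]
  simp only [Ideal.mem_span_singleton_mul, Ideal.mem_span_singleton', exists_exists_and_eq_and,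
    exists_exists_eq_and, mul_comm g']

theorem exists_eq_C_mul_of_mem_span_lazardExtension [CommRing R] {h₀ : R[X]}
    {L : List R[X][X]} {g' f : R[X][X]} (hg'mon : g'.Monic)
    (hg' : g' ∈ Ideal.span {p | p ∈ L})
    (hf : f ∈ Ideal.span {p | p ∈ lazardExtension h₀ L g'}) (hdeg : f.degree < g'.degree) :
    ∃ a ∈ Ideal.span {p | p ∈ L}, C h₀ * a = f := by
  obtain ⟨a, ha, b, rfl⟩ := mem_span_lazardExtension.1 hf
  have hrem : a %ₘ g' ∈ Ideal.span {p | p ∈ L} := by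
    rw [modByMonic_eq_sub_mul_div]
    exact sub_mem ha (Ideal.mul_mem_right _ _ hg')
  refine ⟨a %ₘ g', hrem, ?_⟩
  nontriviality R
  calc C h₀ * (a %ₘ g') = (C h₀ * a) %ₘ g' := by
        rw [← smul_eq_C_mul, ← smul_eq_C_mul, smul_modByMonic]
    _ = (C h₀ * a + g' * b) %ₘ g' := by
        rw [add_modByMonic, (modByMonic_eq_zero_iff_dvd hg'mon).2 (dvd_mul_right g' b), add_zero]
    _ = C h₀ * a + g' * b := (modByMonic_eq_self_iff hg'mon).2 hdeg

end Lists

section LeadingMonomials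

variable {k : Type*} [Field k]

theorem lmLex_C (a : k[X]) : lmLex (C a) = (0, a.natDegree) := by
  rw [lmLex, natDegree_C, leadingCoeff_C]

theorem lmLex_mul {p q : k[X][X]} (hp : p ≠ 0) (hq : q ≠ 0) :
    lmLex (p * q) = lmLex p + lmLex q := by
  rw [lmLex, natDegree_mul hp hq, leadingCoeff_mul,
    natDegree_mul (leadingCoeff_ne_zero.2 hp) (leadingCoeff_ne_zero.2 hq)]
  rfl

theorem lmLex_of_monic {p : k[X][X]} (hp : p.Monic) : lmLex p = (p.natDegree, 0) := by
  rw [lmLex, hp.leadingCoeff, natDegree_one]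

theorem monDvd_add_left_iff {a m n : ℕ × ℕ} : monDvd (a + m) (a + n) ↔ monDvd m n :=
  add_le_add_iff_left a

theorem monDvd_lmLex_mul_left_iff {a p q : k[X][X]} (ha : a ≠ 0) (hp : p ≠ 0) (hq : q ≠ 0) :
    monDvd (lmLex (a * p)) (lmLex (a * q)) ↔ monDvd (lmLex p) (lmLex q) := by
  rw [lmLex_mul ha hp, lmLex_mul ha hq, monDvd_add_left_iff]

/-- The exponent of the lexicographic leading monomial, in the lexicographic order that compares
the `y`-degree first; unlike `lmLex`, it distinguishes `0`, sent to `(⊥, ⊥)`, from the constants.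
Reduction of polynomials terminates because it decreases `lexDegree`. -/
noncomputable def lexDegree {R : Type*} [Semiring R] (f : R[X][X]) : WithBot ℕ ×ₗ WithBot ℕ :=
  toLex (f.degree, f.leadingCoeff.degree)

theorem degree_le_of_lexDegree_le {R : Type*} [Semiring R] {f g : R[X][X]}
    (hfg : lexDegree f ≤ lexDegree g) : f.degree ≤ g.degree :=
  Prod.Lex.monotone_fst _ _ hfg

theorem lexDegree_lt_of_degree_coeff_lt {R : Type*} [Semiring R] {f g : R[X][X]}
    (hdeg : f.degree ≤ g.degree)
    (hcoeff : (f.coeff g.natDegree).degree < g.leadingCoeff.degree) :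
    lexDegree f < lexDegree g := by
  refine Prod.Lex.toLex_lt_toLex.2 (hdeg.lt_or_eq.imp_right fun heq => ⟨heq, ?_⟩)
  rwa [leadingCoeff, natDegree_eq_natDegree heq]

theorem exists_lexDegree_sub_mul_lt {f p : k[X][X]} (hf : f ≠ 0) (hp : p ≠ 0)
    (hdvd : monDvd (lmLex p) (lmLex f)) : ∃ m, lexDegree (f - m * p) < lexDegree f := by
  obtain ⟨hy, hx⟩ := hdvd
  have hlp : p.leadingCoeff ≠ 0 := leadingCoeff_ne_zero.2 hp
  have hlf : f.leadingCoeff ≠ 0 := leadingCoeff_ne_zero.2 hf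
  -- Dividing the whole leading coefficients, not just their leading terms, leaves a remainder
  -- as the new coefficient.
  let m : k[X][X] := C (f.leadingCoeff / p.leadingCoeff) * X ^ (f.natDegree - p.natDegree)
  have hdeg : (f - m * p).natDegree ≤ f.natDegree := by
    refine (natDegree_sub_le _ _).trans (max_le le_rfl (natDegree_mul_le.trans ?_))
    exact (Nat.add_le_add_right (natDegree_C_mul_X_pow_le _ _) _).trans_eq
      (Nat.sub_add_cancel hy)
  have hcoeff : (f - m * p).coeff f.natDegree = f.leadingCoeff % p.leadingCoeff := by
    rw [coeff_sub, mul_assoc, coeff_C_mul, coeff_X_pow_mul', if_pos (Nat.sub_le _ _),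
      show f.natDegree - (f.natDegree - p.natDegree) = p.natDegree from Nat.sub_sub_self hy,
      coeff_natDegree, coeff_natDegree, EuclideanDomain.mod_eq_sub_mul_div, mul_comm]
  have hlt : ((f - m * p).coeff f.natDegree).degree < f.leadingCoeff.degree := by
    rw [hcoeff]
    exact (degree_mod_lt _ hlp).trans_le (degree_le_degree_of_natDegree_le_natDegree hlf hx)
  exact ⟨m, lexDegree_lt_of_degree_coeff_lt
    (degree_le_degree_of_natDegree_le_natDegree hf hdeg) hlt⟩

end LeadingMonomials

section GroebnerBases

variable {k : Type*} [Field k] {L : List k[X][X]}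

theorem IsLexGB.mem_span_degree_le (hL : IsLexGB L) {f : k[X][X]}
    (hf : f ∈ Ideal.span {p | p ∈ L}) : f ∈ Ideal.span {p | p ∈ L ∧ p.degree ≤ f.degree} := by
  induction hd : lexDegree f using WellFoundedLT.induction generalizing f with
  | ind d ih =>
    subst hd
    obtain rfl | hf0 := eq_or_ne f 0
    · exact zero_mem _
    obtain ⟨p, hpL, hp0, hdvd⟩ := hL f hf hf0
    obtain ⟨m, hlt⟩ := exists_lexDegree_sub_mul_lt hf0 hp0 hdvd
    have hrem : f - m * p ∈ Ideal.span {q | q ∈ L ∧ q.degree ≤ (f - m * p).degree} :=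
      ih _ hlt (sub_mem hf (Ideal.mul_mem_left _ _ (Ideal.subset_span hpL))) rfl
    have hpf : p ∈ Ideal.span {q | q ∈ L ∧ q.degree ≤ f.degree} :=
      Ideal.subset_span ⟨hpL, degree_le_degree_of_natDegree_le_natDegree hf0 hdvd.1⟩
    have hsub : {q | q ∈ L ∧ q.degree ≤ (f - m * p).degree} ⊆ {q | q ∈ L ∧ q.degree ≤ f.degree} :=
      fun q hq => ⟨hq.1, hq.2.trans (degree_le_of_lexDegree_le hlt.le)⟩
    simpa only [sub_add_cancel] using
      add_mem (Ideal.span_mono hsub hrem) (Ideal.mul_mem_left _ m hpf)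

variable {h₀ : k[X]} {g' : k[X][X]}

theorem IsLexGB.exists_eq_C_mul_of_mem_span (hGB : IsLexGB (lazardExtension h₀ L g'))
    {f : k[X][X]} (hf : f ∈ Ideal.span {p | p ∈ lazardExtension h₀ L g'})
    (hdeg : f.degree < g'.degree) : ∃ a ∈ Ideal.span {p | p ∈ L}, C h₀ * a = f := by
  rw [← Ideal.mem_span_singleton_mul]
  refine Ideal.span_le.2 ?_ (hGB.mem_span_degree_le hf)
  rintro p ⟨hp, hpf⟩
  obtain ⟨q, hq, rfl⟩ | rfl := mem_lazardExtension.1 hp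
  · exact Ideal.mul_mem_mul (Ideal.mem_span_singleton_self _) (Ideal.subset_span hq)
  · exact absurd hdeg hpf.not_gt

theorem IsLexGB.mem_span_of_lazardExtension (hGB : IsLexGB (lazardExtension h₀ L g'))
    (hh₀ : h₀ ≠ 0) {G : k[X][X]} (hG : G ∈ Ideal.span {p | p ∈ L}) (Gmon : G.Monic)
    (hdeg : G.degree ≤ g'.degree) : g' ∈ Ideal.span {p | p ∈ L} := by
  have hmul : G * (g' /ₘ G) ∈ Ideal.span {p | p ∈ L} := Ideal.mul_mem_right _ _ hG
  have hmem : C h₀ * (g' %ₘ G) ∈ Ideal.span {p | p ∈ lazardExtension h₀ L g'} := by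
    refine mem_span_lazardExtension.2 ⟨-(G * (g' /ₘ G)), neg_mem hmul, C h₀, ?_⟩
    rw [modByMonic_eq_sub_mul_div]
    ring
  have hlt : (C h₀ * (g' %ₘ G)).degree < g'.degree := by
    rw [degree_C_mul hh₀]
    exact (degree_modByMonic_lt g' Gmon).trans_le hdeg
  obtain ⟨a, ha, haeq⟩ := hGB.exists_eq_C_mul_of_mem_span hmem hlt
  rw [mul_left_cancel₀ (C_ne_zero.2 hh₀) haeq] at ha
  rw [← modByMonic_add_div g' G]
  exact add_mem ha hmul

theorem IsLexGB.lazardExtension (hGB : IsLexGB L) (hg'mon : g'.Monic)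
    (hg' : g' ∈ Ideal.span {p | p ∈ L}) : IsLexGB (lazardExtension h₀ L g') := by
  intro f hf hf0
  obtain hle | hlt := le_or_gt g'.natDegree f.natDegree
  · refine ⟨g', mem_lazardExtension.2 (.inr rfl), hg'mon.ne_zero, ?_⟩
    rw [lmLex_of_monic hg'mon]
    exact ⟨hle, Nat.zero_le _⟩
  · obtain ⟨a, ha, rfl⟩ :=
      exists_eq_C_mul_of_mem_span_lazardExtension hg'mon hg' hf (degree_lt_degree hlt)
    obtain ⟨hC, ha0⟩ := mul_ne_zero_iff.1 hf0
    obtain ⟨p, hp, hp0, hdvd⟩ := hGB a ha ha0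
    exact ⟨C h₀ * p, mem_lazardExtension.2 (.inl ⟨p, hp, rfl⟩), mul_ne_zero hC hp0,
      (monDvd_lmLex_mul_left_iff hC hp0 ha0).2 hdvd⟩

theorem isMinimalLexGB_iff_pairwise :
    IsMinimalLexGB L ↔
      IsLexGB L ∧ L.Pairwise fun p q => IncompRel monDvd (lmLex p) (lmLex q) := by
  refine and_congr_right fun _ => ?_
  rw [List.pairwise_iff_get]
  refine ⟨fun H i j hij => ⟨H i j hij.ne, H j i hij.ne'⟩, fun H i j hij => ?_⟩
  obtain hlt | hgt := hij.lt_or_gt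
  · exact (H i j hlt).1
  · exact (H j i hgt).2

theorem incompRel_lmLex_C_mul_of_monic {p : k[X][X]} (h₀deg : 0 < h₀.natDegree) (hp : p ≠ 0)
    (hg'mon : g'.Monic) (hdeg : p.natDegree < g'.natDegree) :
    IncompRel monDvd (lmLex (C h₀ * p)) (lmLex g') := by
  have hC : (C h₀ : k[X][X]) ≠ 0 := C_ne_zero.2 (ne_zero_of_natDegree_gt h₀deg)
  rw [lmLex_mul hC hp, lmLex_C, lmLex_of_monic hg'mon]
  refine ⟨fun hdvd => ?_, fun hdvd => ?_⟩
  · have hx : h₀.natDegree + p.leadingCoeff.natDegree ≤ 0 := hdvd.2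
    omega
  · have hy : g'.natDegree ≤ 0 + p.natDegree := hdvd.1
    omega

theorem pairwise_incompRel_lazardExtension_iff (h₀deg : 0 < h₀.natDegree) (hg'mon : g'.Monic)
    (hL0 : ∀ p ∈ L, p ≠ 0) (hdeg : ∀ p ∈ L, p.natDegree < g'.natDegree) :
    ((lazardExtension h₀ L g').Pairwise fun p q => IncompRel monDvd (lmLex p) (lmLex q)) ↔
      L.Pairwise fun p q => IncompRel monDvd (lmLex p) (lmLex q) := by
  have hC : (C h₀ : k[X][X]) ≠ 0 := C_ne_zero.2 (ne_zero_of_natDegree_gt h₀deg)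
  have hlast : ∀ p ∈ L, IncompRel monDvd (lmLex (C h₀ * p)) (lmLex g') := fun p hp =>
    incompRel_lmLex_C_mul_of_monic h₀deg (hL0 p hp) hg'mon (hdeg p hp)
  rw [lazardExtension, List.pairwise_append, List.pairwise_map]
  simp only [List.forall_mem_map, List.mem_singleton, forall_eq, List.pairwise_singleton,
    iff_true_intro hlast, and_true]
  refine List.Pairwise.iff_of_mem fun hp hq => ?_
  exact and_congr (monDvd_lmLex_mul_left_iff hC (hL0 _ hp) (hL0 _ hq)).not
    (monDvd_lmLex_mul_left_iff hC (hL0 _ hq) (hL0 _ hp)).not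

theorem lazard_partB_general (hGB : IsLexGB L) (hL0 : ∀ p ∈ L, p ≠ 0)
    (hmonic : ∃ G ∈ L, G.Monic) (hdeg : ∀ p ∈ L, p.natDegree < g'.natDegree)
    (h₀deg : 0 < h₀.natDegree) (hg'mon : g'.Monic) :
    (IsLexGB (lazardExtension h₀ L g') ↔ g' ∈ Ideal.span {f | f ∈ L}) ∧
    (g' ∈ Ideal.span {f | f ∈ L} →
      (IsMinimalLexGB (lazardExtension h₀ L g') ↔ IsMinimalLexGB L)) := by
  obtain ⟨G, hGL, Gmon⟩ := hmonic
  have hiff : IsLexGB (lazardExtension h₀ L g') ↔ g' ∈ Ideal.span {f | f ∈ L} :=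
    ⟨fun hGB' => hGB'.mem_span_of_lazardExtension (ne_zero_of_natDegree_gt h₀deg)
      (Ideal.subset_span hGL) Gmon (degree_lt_degree (hdeg G hGL)).le,
      hGB.lazardExtension hg'mon⟩
  refine ⟨hiff, fun hg' => ?_⟩
  rw [isMinimalLexGB_iff_pairwise, isMinimalLexGB_iff_pairwise,
    pairwise_incompRel_lazardExtension_iff h₀deg hg'mon hL0 hdeg,
    iff_true_intro hGB, iff_true_intro (hiff.2 hg')]

end GroebnerBases

/-- **Lazard's structural theorem, part (B).**
Let `L = [h₁, h₂ g₂, …, h_{ℓ-1} g_{ℓ-1}, g_ℓ]` with `h₁, …, h_{ℓ-1} ∈ k[x]` monic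
non-constant, `hᵢ ∣ h_{i-1}`, and `g₂, …, g_ℓ` monic in `y` of strictly increasing
`y`-degrees, and suppose `L` is a lexicographic Gröbner basis.  For `h₀ ∈ k[x]` monic
non-constant and `g' ∈ k[x][y]` monic in `y` of `y`-degree larger than those of all
the `gᵢ`, the list `L' = [h₀·f : f ∈ L] ++ [g']` is a lexicographic Gröbner basis
iff `g'` lies in the ideal generated by `L`; moreover `L'` is minimal iff `L` is. -/
theorem lazard_partB {k : Type*} [Field k] (ℓ : ℕ) (hℓ : 2 ≤ ℓ)
    (h : ℕ → Polynomial k) (g : ℕ → Polynomial (Polynomial k))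
    (hmon : ∀ i, 1 ≤ i → i ≤ ℓ - 1 → (h i).Monic ∧ 0 < (h i).natDegree)
    (hdvd : ∀ i, 2 ≤ i → i ≤ ℓ - 1 → h i ∣ h (i - 1))
    (gmon : ∀ i, 2 ≤ i → i ≤ ℓ → (g i).Monic)
    (ginc : ∀ i, 2 ≤ i → i < ℓ → (g i).natDegree < (g (i + 1)).natDegree)
    (L : List (Polynomial (Polynomial k)))
    (hL : L = [Polynomial.C (h 1)] ++
      ((List.range (ℓ - 2)).map fun i => Polynomial.C (h (i + 2)) * g (i + 2)) ++ [g ℓ])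
    (hGB : IsLexGB L)
    (h₀ : Polynomial k) (h₀mon : h₀.Monic) (h₀deg : 0 < h₀.natDegree)
    (g' : Polynomial (Polynomial k)) (g'mon : g'.Monic)
    (g'deg : ∀ i, 2 ≤ i → i ≤ ℓ → (g i).natDegree < g'.natDegree)
    (L' : List (Polynomial (Polynomial k)))
    (hL' : L' = (L.map fun f => Polynomial.C h₀ * f) ++ [g']) :
    (IsLexGB L' ↔ g' ∈ Ideal.span {f | f ∈ L}) ∧
    (g' ∈ Ideal.span {f | f ∈ L} → (IsMinimalLexGB L' ↔ IsMinimalLexGB L)) := by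
  subst hL hL'
  exact lazard_partB_general hGB
    (ne_zero_of_mem_lazardList hℓ (fun i hi hiℓ => (hmon i hi hiℓ).1.ne_zero)
      fun i hi hiℓ => (gmon i hi hiℓ).ne_zero)
    ⟨g ℓ, List.mem_append_right _ (List.mem_singleton_self _), gmon ℓ hℓ le_rfl⟩
    (natDegree_lt_of_mem_lazardList hℓ g'deg) h₀deg g'mon
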